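/- With V=Q^6 the standard symplectic space and H = GL2 ⊠ GSp4 embedded in GSp6 acting on V=⟨e1,f1⟩⊕⟨e2,e3,f3,f2⟩ (with matching similitudes), every H(Q)-orbit of pairs (F2 ⊆ F3) with F2 a 2-dimensional isotropic subspace and F3 a 3-dimensional isotropic subspace of V contains exactly one of the five representatives: (1) ⟨f2,f3⟩⊆⟨f1,f2,f3⟩, (2) ⟨f1,f2⟩⊆⟨f1,f2,f3⟩, (3) ⟨f1+f2,f3⟩⊆⟨f1,f2,f3⟩, (4) ⟨f1+f2,f3⟩⊆⟨f1+f2,e1-e2,f3⟩, (5) ⟨f1+f2,e1-e2⟩⊆⟨f1+f2,e1-e2,f3⟩. -/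

import Mathlib

/-! The 6-dimensional symplectic ℚ-space `V = ⟨e1,f1⟩ ⊕ ⟨e2,e3,f3,f2⟩`, with the group
`H = GL2 ⊠ GSp4` of symplectic similitudes preserving the two summands (a single similitude
factor encodes the matching-similitude condition), acting on flags `F2 ⊆ F3` of isotropic
subspaces of dimensions 2 and 3. -/

abbrev V6 : Type := Fin 6 → ℚ

/-- Symplectic form; indices `0,…,5` are `e1,e2,e3,f3,f2,f1`. -/
def symp (x y : V6) : ℚ :=
  x 0 * y 5 - x 5 * y 0 + x 1 * y 4 - x 4 * y 1 + x 2 * y 3 - x 3 * y 2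

def e1 : V6 := Pi.single 0 1
def e2 : V6 := Pi.single 1 1
def e3 : V6 := Pi.single 2 1
def f3 : V6 := Pi.single 3 1
def f2 : V6 := Pi.single 4 1
def f1 : V6 := Pi.single 5 1

/-- `V1 = ⟨e1, f1⟩`. -/
def V1 : Submodule ℚ V6 := Submodule.span ℚ {e1, f1}
/-- `V2 = ⟨e2, e3, f3, f2⟩`. -/
def V2 : Submodule ℚ V6 := Submodule.span ℚ {e2, e3, f3, f2}

/-- `H(ℚ) = (GL2 ⊠ GSp4)(ℚ)`: invertible linear maps preserving the decomposition
`V = V1 ⊕ V2` and scaling the symplectic form by a single nonzero similitude factor. -/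
def Hgrp : Set (V6 ≃ₗ[ℚ] V6) :=
  {g | (∃ ν : ℚ, ν ≠ 0 ∧ ∀ x y : V6, symp (g x) (g y) = ν * symp x y) ∧
    Submodule.map (g : V6 →ₗ[ℚ] V6) V1 = V1 ∧ Submodule.map (g : V6 →ₗ[ℚ] V6) V2 = V2}

/-- A subspace is isotropic if the symplectic form vanishes on it. -/
def IsIsotropic (W : Submodule ℚ V6) : Prop := ∀ x ∈ W, ∀ y ∈ W, symp x y = 0

/-- The five representative flags. -/
def repFlag : Fin 5 → Submodule ℚ V6 × Submodule ℚ V6 :=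
  ![(Submodule.span ℚ {f2, f3}, Submodule.span ℚ {f1, f2, f3}),
    (Submodule.span ℚ {f1, f2}, Submodule.span ℚ {f1, f2, f3}),
    (Submodule.span ℚ {f1 + f2, f3}, Submodule.span ℚ {f1, f2, f3}),
    (Submodule.span ℚ {f1 + f2, f3}, Submodule.span ℚ {f1 + f2, e1 - e2, f3}),
    (Submodule.span ℚ {f1 + f2, e1 - e2}, Submodule.span ℚ {f1 + f2, e1 - e2, f3})]


namespace FlagOrbit

lemma mem_V1 (x : V6) : x ∈ V1 ↔ x 1 = 0 ∧ x 2 = 0 ∧ x 3 = 0 ∧ x 4 = 0 := by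
  unfold V1
  rw [Submodule.mem_span_pair]
  constructor
  · rintro ⟨a, b, rfl⟩
    simp [e1, f1]
  · rintro ⟨h1, h2, h3, h4⟩
    refine ⟨x 0, x 5, ?_⟩
    ext i
    fin_cases i <;> simp [e1, f1, h1, h2, h3, h4]

lemma mem_V2 (x : V6) : x ∈ V2 ↔ x 0 = 0 ∧ x 5 = 0 := by
  unfold V2
  simp only [Submodule.mem_span_insert, Submodule.mem_span_singleton]
  constructor
  · rintro ⟨a, _, ⟨b, _, ⟨c, _, ⟨d, rfl⟩, rfl⟩, rfl⟩, rfl⟩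
    simp [e2, e3, f3, f2]
  · rintro ⟨h1, h2⟩
    refine ⟨x 1, _, ⟨x 2, _, ⟨x 3, _, ⟨x 4, rfl⟩, rfl⟩, rfl⟩, ?_⟩
    ext i
    fin_cases i <;> simp [e2, e3, f3, f2, h1, h2]

/-- The symplectic form as a bilinear form. -/
def B : LinearMap.BilinForm ℚ V6 :=
  LinearMap.mk₂ ℚ symp
    (by intros; simp [symp]; ring) (by intros; simp [symp]; ring)
    (by intros; simp [symp]; ring) (by intros; simp [symp]; ring)

lemma B_apply (x y : V6) : B x y = symp x y := rfl

lemma symp_add_left (x y z : V6) : symp (x + y) z = symp x z + symp y z := by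
  simp [symp]; ring
lemma symp_add_right (x y z : V6) : symp x (y + z) = symp x y + symp x z := by
  simp [symp]; ring
lemma symp_smul_left (c : ℚ) (x y : V6) : symp (c • x) y = c * symp x y := by
  simp [symp]; ring
lemma symp_smul_right (c : ℚ) (x y : V6) : symp x (c • y) = c * symp x y := by
  simp [symp]; ring
lemma symp_self (x : V6) : symp x x = 0 := by simp [symp]; ring
lemma symp_swap (x y : V6) : symp x y = - symp y x := by simp [symp]; ring

lemma eq_zero_of_symp {x : V6} (h : ∀ y, symp x y = 0) : x = 0 := by
  have h0 := h e1
  have h1 := h e2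
  have h2 := h e3
  have h3 := h f3
  have h4 := h f2
  have h5 := h f1
  simp [symp, e1, e2, e3, f1, f2, f3] at h0 h1 h2 h3 h4 h5
  ext i
  fin_cases i <;> simp [*]

lemma symp_V1_V2 {x y : V6} (hx : x ∈ V1) (hy : y ∈ V2) : symp x y = 0 := by
  rw [mem_V1] at hx
  rw [mem_V2] at hy
  simp [symp, hx, hy]

lemma symp_V2_V1 {x y : V6} (hx : x ∈ V2) (hy : y ∈ V1) : symp x y = 0 := by
  rw [symp_swap, symp_V1_V2 hy hx, neg_zero]

lemma B_nondeg : B.Nondegenerate := by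
  refine ⟨fun x hx => eq_zero_of_symp hx, fun x hx => eq_zero_of_symp fun y => ?_⟩
  rw [symp_swap, ← B_apply, hx y, neg_zero]

lemma B_refl : B.IsRefl := by
  intro x y h
  rw [B_apply] at h ⊢
  rw [symp_swap, h, neg_zero]

/-- A three-dimensional isotropic subspace is its own orthogonal. -/
lemma mem_of_orth {F : Submodule ℚ V6} (h3 : Module.finrank ℚ F = 3) (hiso : IsIsotropic F)
    {l : V6} (hl : ∀ x ∈ F, symp x l = 0) : l ∈ F := by
  have hle : F ≤ B.orthogonal F := by
    intro x hx
    rw [LinearMap.BilinForm.mem_orthogonal_iff]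
    intro y hy
    exact hiso y hy x hx
  have hf := LinearMap.BilinForm.finrank_orthogonal B_nondeg F
  have : F = B.orthogonal F := by
    apply Submodule.eq_of_le_of_finrank_eq hle
    rw [hf, h3]; simp
  rw [this, LinearMap.BilinForm.mem_orthogonal_iff]
  exact hl

/-- Construction of elements of `H` from the images of the basis. -/
lemma exists_g {a b c2 c3 d3 d2 : V6} {ν : ℚ} (hν : ν ≠ 0)
    (ha : a ∈ V1) (hb : b ∈ V1) (hc2 : c2 ∈ V2) (hc3 : c3 ∈ V2) (hd3 : d3 ∈ V2) (hd2 : d2 ∈ V2)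
    (hab : symp a b = ν) (h22 : symp c2 d2 = ν) (h33 : symp c3 d3 = ν)
    (hcc : symp c2 c3 = 0) (hdd : symp d2 d3 = 0) (h23 : symp c2 d3 = 0) (h32 : symp c3 d2 = 0) :
    ∃ g ∈ Hgrp, g e1 = a ∧ g e2 = c2 ∧ g e3 = c3 ∧ g f3 = d3 ∧ g f2 = d2 ∧ g f1 = b := by
  let T : V6 →ₗ[ℚ] V6 :=
    { toFun := fun x => x 0 • a + x 1 • c2 + x 2 • c3 + x 3 • d3 + x 4 • d2 + x 5 • b
      map_add' := by intro x y; simp only [Pi.add_apply]; module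
      map_smul' := by
        intro c x; simp only [Pi.smul_apply, RingHom.id_apply, smul_eq_mul]; module }
  have hT : ∀ x, T x = x 0 • a + x 1 • c2 + x 2 • c3 + x 3 • d3 + x 4 • d2 + x 5 • b :=
    fun x => rfl
  have hs : ∀ x y, symp (T x) (T y) = ν * symp x y := by
    intro x y
    simp only [hT, symp_add_left, symp_add_right, symp_smul_left, symp_smul_right, symp_self,
      symp_V1_V2 ha hc2, symp_V1_V2 ha hc3, symp_V1_V2 ha hd2, symp_V1_V2 ha hd3,
      symp_V1_V2 hb hc2, symp_V1_V2 hb hc3, symp_V1_V2 hb hd2, symp_V1_V2 hb hd3,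
      symp_V2_V1 hc2 ha, symp_V2_V1 hc3 ha, symp_V2_V1 hd2 ha, symp_V2_V1 hd3 ha,
      symp_V2_V1 hc2 hb, symp_V2_V1 hc3 hb, symp_V2_V1 hd2 hb, symp_V2_V1 hd3 hb,
      hab, h22, h33, hcc, hdd, h23, h32, symp_swap b a, symp_swap d2 c2, symp_swap d3 c3,
      symp_swap c3 c2, symp_swap d3 d2, symp_swap d3 c2, symp_swap d2 c3]
    simp only [symp]
    ring
  have hinj : Function.Injective T := by
    rw [← LinearMap.ker_eq_bot, LinearMap.ker_eq_bot']
    intro x hx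
    apply eq_zero_of_symp
    intro y
    have := hs x y
    rw [hx] at this
    have h0 : symp 0 (T y) = 0 := by simp [symp]
    rw [h0] at this
    rcases mul_eq_zero.1 this.symm with h | h
    · exact absurd h hν
    · exact h
  let g := LinearEquiv.ofInjectiveEndo T hinj
  have hg : ∀ x, g x = T x := fun x => rfl
  have hge : g e1 = a ∧ g e2 = c2 ∧ g e3 = c3 ∧ g f3 = d3 ∧ g f2 = d2 ∧ g f1 = b := by
    simp only [hg, hT]
    simp [e1, e2, e3, f1, f2, f3]
  refine ⟨g, ⟨⟨ν, hν, hs⟩, ?_, ?_⟩, hge⟩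
  · apply Submodule.eq_of_le_of_finrank_eq
    · rw [Submodule.map_le_iff_le_comap]
      conv_lhs => unfold V1
      rw [Submodule.span_le]
      rintro x (rfl | rfl)
      · simpa [hge] using ha
      · simpa [hge] using hb
    · exact LinearEquiv.finrank_map_eq g V1
  · apply Submodule.eq_of_le_of_finrank_eq
    · rw [Submodule.map_le_iff_le_comap]
      conv_lhs => unfold V2
      rw [Submodule.span_le]
      rintro x (rfl | rfl | rfl | rfl) <;> simpa [hge]
    · exact LinearEquiv.finrank_map_eq g V2

lemma exists_dual_one {w w' : V6} (hw : w ∈ V2) (hw' : w' ∈ V2) (h0 : w' ≠ 0)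
    (h : w ∉ Submodule.span ℚ {w'}) : ∃ x ∈ V2, symp x w = 1 ∧ symp x w' = 0 := by
  by_contra hcon
  push Not at hcon
  have H : ∀ x ∈ V2, symp x w' = 0 → symp x w = 0 := by
    intro x hx hxw
    by_contra hne
    refine hcon ((symp x w)⁻¹ • x) (V2.smul_mem _ hx) ?_ ?_
    · rw [symp_smul_left, inv_mul_cancel₀ hne]
    · rw [symp_smul_left, hxw, mul_zero]
  rw [mem_V2] at hw hw'
  have K : ∀ p q r s : ℚ, p * w' 4 - s * w' 1 + q * w' 3 - r * w' 2 = 0 →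
      p * w 4 - s * w 1 + q * w 3 - r * w 2 = 0 := by
    intro p q r s hh
    have := H ![0, p, q, r, s, 0] (by rw [mem_V2]; simp)
      (by simp [symp]; linarith)
    simp [symp] at this
    linarith
  apply h
  rw [Submodule.mem_span_singleton]
  have k12 := K 0 0 (w' 1) (-w' 2) (by ring)
  have k13 := K 0 (w' 1) 0 (w' 3) (by ring)
  have k14 := K (w' 1) 0 0 (w' 4) (by ring)
  have k23 := K 0 (w' 2) (w' 3) 0 (by ring)
  have k24 := K (w' 2) 0 (w' 4) 0 (by ring)
  have k34 := K (w' 3) (-w' 4) 0 0 (by ring)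
  have : w' 1 ≠ 0 ∨ w' 2 ≠ 0 ∨ w' 3 ≠ 0 ∨ w' 4 ≠ 0 := by
    by_contra hall
    push Not at hall
    apply h0
    ext i
    fin_cases i <;> simp [hall, hw']
  rcases this with hi | hi | hi | hi
  · refine ⟨w 1 / w' 1, ?_⟩
    ext i
    fin_cases i <;> simp [hw, hw'] <;> field_simp <;> linarith
  · refine ⟨w 2 / w' 2, ?_⟩
    ext i
    fin_cases i <;> simp [hw, hw'] <;> field_simp <;> linarith
  · refine ⟨w 3 / w' 3, ?_⟩
    ext i
    fin_cases i <;> simp [hw, hw'] <;> field_simp <;> linarith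
  · refine ⟨w 4 / w' 4, ?_⟩
    ext i
    fin_cases i <;> simp [hw, hw'] <;> field_simp <;> linarith

lemma exists_dual_two {w2 w3 : V6} (hw2 : w2 ∈ V2) (hw3 : w3 ∈ V2) (hO : symp w2 w3 = 0)
    (h0 : w2 ≠ 0) (h : w3 ∉ Submodule.span ℚ {w2}) :
    ∃ c2 ∈ V2, ∃ c3 ∈ V2, symp c2 w2 = 1 ∧ symp c2 w3 = 0 ∧ symp c3 w3 = 1 ∧ symp c3 w2 = 0 ∧
      symp c2 c3 = 0 := by
  have h' : w2 ∉ Submodule.span ℚ {w3} := by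
    rw [Submodule.mem_span_singleton] at h ⊢
    rintro ⟨t, rfl⟩
    have ht : t ≠ 0 := by
      rintro rfl
      simp at h0
    exact h ⟨t⁻¹, by rw [smul_smul, inv_mul_cancel₀ ht, one_smul]⟩
  have h0' : w3 ≠ 0 := by
    rintro rfl
    exact h (Submodule.zero_mem _)
  obtain ⟨c2, hc2, h22, h23⟩ := exists_dual_one hw2 hw3 h0' h'
  obtain ⟨c3, hc3, h33, h32⟩ := exists_dual_one hw3 hw2 h0 h
  refine ⟨c2, hc2, c3 + (-symp c2 c3) • w2, V2.add_mem hc3 (V2.smul_mem _ hw2), h22, h23, ?_, ?_, ?_⟩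
  · rw [symp_add_left, symp_smul_left, h33, hO]; ring
  · rw [symp_add_left, symp_smul_left, h32, symp_self]; ring
  · rw [symp_add_right, symp_smul_right, h22]; ring

lemma exists_not_mem {W : Submodule ℚ V6} (s : Finset V6) (h : s.card < Module.finrank ℚ W) :
    ∃ x ∈ W, x ∉ Submodule.span ℚ (s : Set V6) := by
  by_contra hcon
  push Not at hcon
  have h1 : W ≤ Submodule.span ℚ (s : Set V6) := hcon
  have h2 := Submodule.finrank_mono h1
  have h3 := finrank_span_finset_le_card (R := ℚ) s
  simp only [Set.finrank] at h3
  omega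

lemma map_pair {u v : V6} {F : Submodule ℚ V6} {g : V6 ≃ₗ[ℚ] V6}
    (hF : Module.finrank ℚ F = 2) (hind : ∀ s t : ℚ, s • u + t • v = 0 → s = 0 ∧ t = 0)
    (hu : g u ∈ F) (hv : g v ∈ F) :
    Submodule.map (g : V6 →ₗ[ℚ] V6) (Submodule.span ℚ {u, v}) = F := by
  apply Submodule.eq_of_le_of_finrank_eq
  · rw [Submodule.map_le_iff_le_comap, Submodule.span_le]
    rintro x (rfl | rfl)
    · exact hu
    · exact hv
  · rw [LinearEquiv.finrank_map_eq g, hF]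
    have := finrank_span_eq_card (LinearIndependent.pair_iff.2 hind)
    have hr : Set.range ![u, v] = {u, v} := by
      rw [Matrix.range_cons, Matrix.range_cons, Matrix.range_empty, Set.union_empty]
      rfl
    rw [hr] at this
    simpa using this

lemma map_triple {u v w : V6} {F : Submodule ℚ V6} {g : V6 ≃ₗ[ℚ] V6}
    (hF : Module.finrank ℚ F = 3)
    (hind : ∀ r s t : ℚ, r • u + s • v + t • w = 0 → r = 0 ∧ s = 0 ∧ t = 0)
    (hu : g u ∈ F) (hv : g v ∈ F) (hw : g w ∈ F) :
    Submodule.map (g : V6 →ₗ[ℚ] V6) (Submodule.span ℚ {u, v, w}) = F := by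
  apply Submodule.eq_of_le_of_finrank_eq
  · rw [Submodule.map_le_iff_le_comap, Submodule.span_le]
    rintro x (rfl | rfl | rfl)
    · exact hu
    · exact hv
    · exact hw
  · rw [LinearEquiv.finrank_map_eq g, hF]
    have hli : LinearIndependent ℚ ![u, v, w] := by
      rw [Fintype.linearIndependent_iff]
      intro c hc
      simp [Fin.sum_univ_three] at hc
      obtain ⟨h0, h1, h2⟩ := hind _ _ _ hc
      intro i
      fin_cases i <;> assumption
    have := finrank_span_eq_card hli
    have hr : Set.range ![u, v, w] = {u, v, w} := by
      rw [Matrix.range_cons, Matrix.range_cons, Matrix.range_cons, Matrix.range_empty,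
        Set.union_empty]
      rfl
    rw [hr] at this
    simpa using this

lemma ind2 {u v : V6} (i j : Fin 6) (hui : u i = 1) (hvi : v i = 0) (huj : u j = 0)
    (hvj : v j ≠ 0) (s t : ℚ) (h : s • u + t • v = 0) : s = 0 ∧ t = 0 := by
  have h1 := congrFun h i
  have h2 := congrFun h j
  simp [hui, hvi, huj, hvj] at h1 h2
  exact ⟨h1, h2⟩

lemma ind3 {u v w : V6} (i j k : Fin 6) (hui : u i = 1) (hvi : v i = 0) (hwi : w i = 0)
    (huj : u j = 0) (hvj : v j = 1) (hwj : w j = 0) (huk : u k = 0) (hvk : v k = 0)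
    (hwk : w k = 1) (r s t : ℚ) (h : r • u + s • v + t • w = 0) : r = 0 ∧ s = 0 ∧ t = 0 := by
  have h1 := congrFun h i
  have h2 := congrFun h j
  have h3 := congrFun h k
  simp [hui, hvi, hwi, huj, hvj, hwj, huk, hvk, hwk] at h1 h2 h3
  exact ⟨h1, h2, h3⟩

/-- Component in `V1`. -/
def p1 (x : V6) : V6 := ![x 0, 0, 0, 0, 0, x 5]
/-- Component in `V2`. -/
def p2 (x : V6) : V6 := ![0, x 1, x 2, x 3, x 4, 0]

lemma p1_mem (x : V6) : p1 x ∈ V1 := by rw [mem_V1]; simp [p1]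
lemma p2_mem (x : V6) : p2 x ∈ V2 := by rw [mem_V2]; simp [p2]
lemma p_add (x : V6) : p1 x + p2 x = x := by
  ext i; fin_cases i <;> simp [p1, p2]
lemma p1_eq_zero {x : V6} (h : p1 x = 0) : x ∈ V2 := by
  rw [← p_add x, h, zero_add]; exact p2_mem x
lemma p2_eq_zero {x : V6} (h : p2 x = 0) : x ∈ V1 := by
  rw [← p_add x, h, add_zero]; exact p1_mem x
lemma p1_add (x y : V6) : p1 (x + y) = p1 x + p1 y := by
  ext i; fin_cases i <;> simp [p1]
lemma p1_smul (c : ℚ) (x : V6) : p1 (c • x) = c • p1 x := by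
  ext i; fin_cases i <;> simp [p1]
lemma p1_V2 {x : V6} (h : x ∈ V2) : p1 x = 0 := by
  rw [mem_V2] at h
  ext i; fin_cases i <;> simp [p1, h]
lemma p1_V1 {x : V6} (h : x ∈ V1) : p1 x = x := by
  rw [mem_V1] at h
  ext i; fin_cases i <;> simp [p1, h]
lemma symp_p1 (x : V6) {y : V6} (h : y ∈ V1) : symp (p1 x) y = symp x y := by
  conv_rhs => rw [← p_add x, symp_add_left, symp_V2_V1 (p2_mem x) h, add_zero]
lemma symp_p2 (x : V6) {y : V6} (h : y ∈ V2) : symp (p2 x) y = symp x y := by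
  conv_rhs => rw [← p_add x, symp_add_left, symp_V1_V2 (p1_mem x) h, zero_add]
lemma symp_split (x y : V6) : symp x y = symp (p1 x) (p1 y) + symp (p2 x) (p2 y) := by
  simp [symp, p1, p2]; ring

lemma V1_two_dim {l x : V6} (hl : l ∈ V1) (hx : x ∈ V1) (h0 : l ≠ 0) (h : symp x l = 0) :
    ∃ t : ℚ, x = t • l := by
  rw [mem_V1] at hl hx
  have h' : x 0 * l 5 = x 5 * l 0 := by
    simp [symp, hl, hx] at h; linarith
  have : l 0 ≠ 0 ∨ l 5 ≠ 0 := by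
    by_contra hall
    push Not at hall
    apply h0
    ext i
    fin_cases i <;> simp [hall, hl]
  rcases this with hi | hi
  · refine ⟨x 0 / l 0, ?_⟩
    ext i
    fin_cases i <;> simp [hl, hx] <;> field_simp <;> linarith
  · refine ⟨x 5 / l 5, ?_⟩
    ext i
    fin_cases i <;> simp [hl, hx] <;> field_simp <;> linarith

lemma exists_V1_dual {l : V6} (hl : l ∈ V1) (h0 : l ≠ 0) : ∃ a ∈ V1, symp a l = 1 := by
  by_contra hcon
  push Not at hcon
  apply h0
  apply eq_zero_of_symp
  intro y
  rw [symp_swap, ← symp_p1 y hl]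
  by_contra hne
  rw [neg_eq_zero] at hne
  apply hcon ((symp (p1 y) l)⁻¹ • p1 y) (V1.smul_mem _ (p1_mem y))
  rw [symp_smul_left, inv_mul_cancel₀ hne]

/-- Elements of `H` from a line in `V1` and a Lagrangian basis of `V2`. -/
lemma exists_gA {l w2 w3 : V6} (hl : l ∈ V1) (hl0 : l ≠ 0) (hw2 : w2 ∈ V2) (hw3 : w3 ∈ V2)
    (hO : symp w2 w3 = 0) (h0 : w2 ≠ 0) (h : w3 ∉ Submodule.span ℚ {w2}) :
    ∃ g ∈ Hgrp, g f1 = l ∧ g f2 = w2 ∧ g f3 = w3 := by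
  obtain ⟨a, ha, hal⟩ := exists_V1_dual hl hl0
  obtain ⟨c2, hc2, c3, hc3, h22, h23, h33, h32, hcc⟩ := exists_dual_two hw2 hw3 hO h0 h
  obtain ⟨g, hg, -, -, -, i3, i2, i1⟩ := exists_g one_ne_zero ha hl hc2 hc3 hw3 hw2 hal h22 h33
    hcc hO h23 h32
  exact ⟨g, hg, i1, i2, i3⟩

lemma exists_gB {x y w : V6} (hw : w ∈ V2) (hw0 : w ≠ 0) (hxy : symp x y = 0)
    (hxw : symp x w = 0) (hyw : symp y w = 0) (hν : symp (p1 x) (p1 y) ≠ 0) :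
    ∃ g ∈ Hgrp, g (f1 + f2) = x ∧ g (e1 - e2) = y ∧ g f3 = w := by
  have hs := symp_split x y
  rw [hxy] at hs
  set ν := symp (p1 x) (p1 y) with hνd
  have hx2w : symp (p2 x) w = 0 := by rw [symp_p2 x hw, hxw]
  have hy2w : symp (p2 y) w = 0 := by rw [symp_p2 y hw, hyw]
  have h22 : symp (p2 x) (p2 y) = -ν := by linarith
  obtain ⟨c, hc, hcw⟩ : ∃ c ∈ V2, symp c w = -ν := by
    by_contra hcon
    push Not at hcon
    apply hw0
    apply eq_zero_of_symp
    intro z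
    rw [symp_swap, ← symp_p2 z hw]
    by_contra hne
    rw [neg_eq_zero] at hne
    apply hcon ((-ν * (symp (p2 z) w)⁻¹) • p2 z) (V2.smul_mem _ (p2_mem z))
    rw [symp_smul_left, mul_assoc, inv_mul_cancel₀ hne, mul_one]
  let c3 := c + (symp c (p2 y) / ν) • p2 x + (-(symp c (p2 x) / ν)) • p2 y
  have hc3 : c3 ∈ V2 :=
    V2.add_mem (V2.add_mem hc (V2.smul_mem _ (p2_mem x))) (V2.smul_mem _ (p2_mem y))
  have k1 : symp c3 w = -ν := by
    simp only [c3, symp_add_left, symp_smul_left, hx2w, hy2w, hcw]; ring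
  have k2 : symp c3 (p2 x) = 0 := by
    simp only [c3, symp_add_left, symp_smul_left, symp_self, symp_swap (p2 y) (p2 x), h22]
    field_simp; ring
  have k3 : symp c3 (p2 y) = 0 := by
    simp only [c3, symp_add_left, symp_smul_left, symp_self, h22]
    field_simp; ring
  obtain ⟨g, hg, j1, j2, -, i3, i2, i1⟩ := exists_g (a := p1 y) (b := p1 x)
    (c2 := (-1 : ℚ) • p2 y) (c3 := c3) (d3 := w) (d2 := p2 x) (ν := -ν) (neg_ne_zero.2 hν)
    (p1_mem y) (p1_mem x) (V2.smul_mem _ (p2_mem y)) hc3 hw (p2_mem x)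
    (by rw [symp_swap]) (by rw [symp_smul_left, symp_swap, h22]; ring) k1
    (by rw [symp_smul_left, symp_swap, k3]; ring) hx2w (by rw [symp_smul_left, hy2w]; ring) k2
  refine ⟨g, hg, ?_, ?_, i3⟩
  · rw [map_add, i1, i2, p_add]
  · rw [map_sub, j1, j2]
    conv_rhs => rw [← p_add y]
    module

lemma existence (F2 F3 : Submodule ℚ V6)
    (h2 : Module.finrank ℚ F2 = 2) (h3 : Module.finrank ℚ F3 = 3)
    (hle : F2 ≤ F3) (hiso : IsIsotropic F3) :
    ∃ k : Fin 5, ∃ g ∈ Hgrp,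
      Submodule.map (g : V6 →ₗ[ℚ] V6) (repFlag k).1 = F2 ∧
      Submodule.map (g : V6 →ₗ[ℚ] V6) (repFlag k).2 = F3 := by
  by_cases hA : ∃ l ∈ F3, l ∈ V1 ∧ l ≠ 0
  · obtain ⟨l, hlF, hlV, hl0⟩ := hA
    have hp1 : ∀ x ∈ F3, ∃ t : ℚ, p1 x = t • l := by
      intro x hx
      apply V1_two_dim hlV (p1_mem x) hl0
      rw [symp_p1 x hlV]
      exact hiso x hx l hlF
    have hp2 : ∀ x ∈ F3, p2 x ∈ F3 := by
      intro x hx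
      obtain ⟨t, ht⟩ := hp1 x hx
      have : p2 x = x - t • l := by
        rw [← ht, eq_sub_iff_add_eq, add_comm, p_add]
      rw [this]
      exact F3.sub_mem hx (F3.smul_mem _ hlF)
    by_cases hV : F2 ≤ V2
    · obtain ⟨w2, hw2, hw20⟩ := exists_not_mem (W := F2) ∅ (by simp [h2])
      obtain ⟨w3, hw3, hw30⟩ := exists_not_mem (W := F2) {w2} (by simp [h2])
      simp at hw20
      simp only [Finset.coe_singleton] at hw30
      obtain ⟨g, hg, i1, i2, i3⟩ := exists_gA hlV hl0 (hV hw2) (hV hw3)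
        (hiso _ (hle hw2) _ (hle hw3)) hw20 hw30
      refine ⟨0, g, hg, ?_, ?_⟩
      · exact map_pair h2 (ind2 4 3 (by simp [f2]) (by simp [f3]) (by simp [f2]) (by simp [f3]))
          (by rwa [i2]) (by rwa [i3])
      · refine map_triple h3 (ind3 5 4 3 ?_ ?_ ?_ ?_ ?_ ?_ ?_ ?_ ?_) (by rwa [i1])
          (by rw [i2]; exact hle hw2) (by rw [i3]; exact hle hw3) <;> simp [f1, f2, f3]
    by_cases hlF2 : l ∈ F2
    · obtain ⟨x, hx, hxl⟩ := exists_not_mem (W := F2) {l} (by simp [h2])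
      simp only [Finset.coe_singleton] at hxl
      obtain ⟨t, ht⟩ := hp1 x (hle hx)
      have hx2 : p2 x = x - t • l := by
        rw [← ht, eq_sub_iff_add_eq, add_comm, p_add]
      have hw2 : p2 x ∈ F2 := by
        rw [hx2]; exact F2.sub_mem hx (F2.smul_mem _ hlF2)
      have hw20 : p2 x ≠ 0 := by
        intro h0
        apply hxl
        rw [Submodule.mem_span_singleton]
        exact ⟨t, by rw [← p_add x, h0, ht, add_zero]⟩
      obtain ⟨z, hz, hzl⟩ := exists_not_mem (W := F3) {l, p2 x}
        (by rw [h3]; exact lt_of_le_of_lt Finset.card_le_two (by norm_num))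
      simp only [Finset.coe_insert, Finset.coe_singleton] at hzl
      have hw3 : p2 z ∉ Submodule.span ℚ {p2 x} := by
        intro hm
        rw [Submodule.mem_span_singleton] at hm
        obtain ⟨s, hs⟩ := hm
        obtain ⟨r, hr⟩ := hp1 z hz
        apply hzl
        rw [Submodule.mem_span_pair]
        exact ⟨r, s, by rw [hs, ← hr, p_add]⟩
      obtain ⟨g, hg, i1, i2, i3⟩ := exists_gA hlV hl0 (p2_mem x) (p2_mem z)
        (hiso _ (hle hw2) _ (hp2 z hz)) hw20 hw3
      refine ⟨1, g, hg, ?_, ?_⟩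
      · exact map_pair h2 (ind2 5 4 (by simp [f1]) (by simp [f2]) (by simp [f1]) (by simp [f2]))
          (by rwa [i1]) (by rwa [i2])
      · refine map_triple h3 (ind3 5 4 3 ?_ ?_ ?_ ?_ ?_ ?_ ?_ ?_ ?_) (by rwa [i1])
          (by rw [i2]; exact hle hw2) (by rw [i3]; exact hp2 z hz) <;> simp [f1, f2, f3]
    · obtain ⟨x, hx, hxV⟩ := Set.not_subset.1 hV
      have hx10 : p1 x ≠ 0 := fun h => hxV (p1_eq_zero h)
      obtain ⟨c, hc⟩ := hp1 x (hle hx)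
      have hc0 : c ≠ 0 := by
        rintro rfl
        exact hx10 (by rw [hc, zero_smul])
      have hlx : l = c⁻¹ • p1 x := by rw [hc, smul_smul, inv_mul_cancel₀ hc0, one_smul]
      have hp1x : p1 x ∉ F2 := by
        intro hm
        apply hlF2
        rw [hlx]
        exact F2.smul_mem _ hm
      have hp1xF : p1 x ∈ F3 := by rw [hc]; exact F3.smul_mem _ hlF
      have hx20 : p2 x ≠ 0 := by
        intro h
        apply hp1x
        have := p_add x
        rw [h, add_zero] at this
        rwa [this]
      obtain ⟨y, hy, hyx⟩ := exists_not_mem (W := F2) {x} (by simp [h2])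
      simp only [Finset.coe_singleton] at hyx
      obtain ⟨d, hd⟩ := hp1 y (hle hy)
      rw [hlx, smul_smul] at hd
      set t := d * c⁻¹
      let w := y + (-t) • x
      have hwF : w ∈ F2 := F2.add_mem hy (F2.smul_mem _ hx)
      have hwV : w ∈ V2 := by
        apply p1_eq_zero
        rw [p1_add, p1_smul, hd]; module
      have hw : w ∉ Submodule.span ℚ {p2 x} := by
        rw [Submodule.mem_span_singleton]
        rintro ⟨s, hs⟩
        by_cases hs0 : s = 0
        · subst hs0
          apply hyx
          rw [Submodule.mem_span_singleton]
          refine ⟨t, ?_⟩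
          have : y + (-t) • x = 0 := by
            change w = 0
            rw [← hs, zero_smul]
          rw [neg_smul, ← sub_eq_add_neg, sub_eq_zero] at this
          exact this.symm
        · apply hp1x
          have e : p2 x = s⁻¹ • w := by rw [← hs, smul_smul, inv_mul_cancel₀ hs0, one_smul]
          have : p1 x = x - s⁻¹ • w := by rw [← e, eq_sub_iff_add_eq, p_add]
          rw [this]
          exact F2.sub_mem hx (F2.smul_mem _ hwF)
      obtain ⟨g, hg, i1, i2, i3⟩ := exists_gA (p1_mem x) hx10 (p2_mem x) hwV
        (hiso _ (hp2 x (hle hx)) _ (hle hwF)) hx20 hw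
      refine ⟨2, g, hg, ?_, ?_⟩
      · exact map_pair h2 (ind2 5 3 (by simp [f1, f2]) (by simp [f3]) (by simp [f1, f2])
          (by simp [f3])) (by rwa [map_add, i1, i2, p_add]) (by rwa [i3])
      · refine map_triple h3 (ind3 5 4 3 ?_ ?_ ?_ ?_ ?_ ?_ ?_ ?_ ?_) (by rwa [i1])
          (by rw [i2]; exact hp2 x (hle hx)) (by rw [i3]; exact hle hwF) <;> simp [f1, f2, f3]
  · have hB : ∀ l ∈ V1, (∀ x ∈ F3, symp x l = 0) → l = 0 := by
      intro l hl ho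
      by_contra h0
      exact hA ⟨l, mem_of_orth h3 hiso ho, hl, h0⟩
    by_cases hC : ∃ w ∈ F2, w ∈ V2 ∧ w ≠ 0
    · obtain ⟨w, hwF, hwV, hw0⟩ := hC
      obtain ⟨x, hx, hxw⟩ := exists_not_mem (W := F2) {w} (by simp [h2])
      simp only [Finset.coe_singleton] at hxw
      have hx10 : p1 x ≠ 0 := by
        intro hx1
        have hxV := p1_eq_zero hx1
        obtain ⟨c2, hc2, c3, hc3, h22, h23, h33, h32, hcc⟩ := exists_dual_two hwV hxV
          (hiso _ (hle hwF) _ (hle hx)) hw0 hxw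
        have hspan : Submodule.map (LinearEquiv.refl ℚ V6 : V6 →ₗ[ℚ] V6)
            (Submodule.span ℚ {w, x}) = F2 := by
          apply map_pair h2 _ hwF hx
          intro s t hst
          have q1 := congrArg (symp c2) hst
          have q2 := congrArg (symp c3) hst
          rw [symp_add_right, symp_smul_right, symp_smul_right] at q1 q2
          have z1 : symp c2 0 = 0 := by simp [symp]
          have z2 : symp c3 0 = 0 := by simp [symp]
          rw [h22, h23, z1] at q1
          rw [h32, h33, z2] at q2
          constructor <;> linarith
        obtain ⟨z, hz, hzs⟩ := exists_not_mem (W := F3) {w, x}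
          (by rw [h3]; exact lt_of_le_of_lt Finset.card_le_two (by norm_num))
        simp only [Finset.coe_insert, Finset.coe_singleton] at hzs
        have hind : ∀ r s t : ℚ, r • z + s • w + t • x = 0 → r = 0 ∧ s = 0 ∧ t = 0 := by
          intro r s t h
          have hr : r = 0 := by
            by_contra hr
            apply hzs
            rw [Submodule.mem_span_pair]
            refine ⟨-(r⁻¹ * s), -(r⁻¹ * t), ?_⟩
            have := congrArg (fun v => r⁻¹ • v) h
            simp only [smul_add, smul_smul, inv_mul_cancel₀ hr, one_smul, smul_zero] at this
            rw [add_assoc, add_eq_zero_iff_eq_neg] at this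
            rw [this]; module
          subst hr
          rw [zero_smul, zero_add] at h
          have q1 := congrArg (symp c2) h
          have q2 := congrArg (symp c3) h
          rw [symp_add_right, symp_smul_right, symp_smul_right] at q1 q2
          have z1 : symp c2 0 = 0 := by simp [symp]
          have z2 : symp c3 0 = 0 := by simp [symp]
          rw [h22, h23, z1] at q1
          rw [h32, h33, z2] at q2
          refine ⟨rfl, ?_, ?_⟩ <;> linarith
        have hsp3 : Submodule.map (LinearEquiv.refl ℚ V6 : V6 →ₗ[ℚ] V6)
            (Submodule.span ℚ {z, w, x}) = F3 :=
          map_triple h3 hind hz (hle hwF) (hle hx)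
        have hall : ∀ y ∈ F3, ∃ r : ℚ, p1 y = r • p1 z := by
          intro y hy
          rw [← hsp3] at hy
          obtain ⟨y', hy', rfl⟩ := hy
          obtain ⟨r, s, t, rfl⟩ := Submodule.mem_span_triple.1 hy'
          refine ⟨r, ?_⟩
          change p1 (r • z + s • w + t • x) = _
          rw [p1_add, p1_add, p1_smul, p1_smul, p1_smul, p1_V2 hwV, hx1]
          simp
        have hz0 : p1 z = 0 := by
          apply hB _ (p1_mem z)
          intro y hy
          obtain ⟨r, hr⟩ := hall y hy
          rw [← symp_p1 y (p1_mem z), hr, symp_smul_left, symp_self, mul_zero]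
        have he1 : e1 = 0 := by
          have he : e1 ∈ V1 := by rw [mem_V1]; simp [e1]
          apply hB _ he
          intro y hy
          obtain ⟨r, hr⟩ := hall y hy
          rw [← symp_p1 y he, hr, hz0]
          simp [symp]
        have := congrFun he1 0
        simp [e1] at this
      obtain ⟨y, hy, hyx⟩ : ∃ y ∈ F3, symp y (p1 x) ≠ 0 := by
        by_contra hcon
        push Not at hcon
        exact hx10 (hB _ (p1_mem x) hcon)
      obtain ⟨g, hg, i1, i2, i3⟩ := exists_gB hwV hw0 (hiso _ (hle hx) _ hy)
        (hiso _ (hle hx) _ (hle hwF)) (hiso _ hy _ (hle hwF))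
        (by rw [symp_swap, symp_p1 y (p1_mem x)]; exact neg_ne_zero.2 hyx)
      refine ⟨3, g, hg, ?_, ?_⟩
      · exact map_pair h2 (ind2 5 3 (by simp [f1, f2]) (by simp [f3]) (by simp [f1, f2])
          (by simp [f3])) (by rwa [i1]) (by rwa [i3])
      · refine map_triple h3 (ind3 5 0 3 ?_ ?_ ?_ ?_ ?_ ?_ ?_ ?_ ?_) (by rw [i1]; exact hle hx)
          (by rwa [i2]) (by rw [i3]; exact hle hwF) <;> simp [f1, f2, f3, e1, e2]
    · obtain ⟨x, hx, hx0⟩ := exists_not_mem (W := F2) ∅ (by simp [h2])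
      obtain ⟨y, hy, hyx⟩ := exists_not_mem (W := F2) {x} (by simp [h2])
      simp at hx0
      simp only [Finset.coe_singleton] at hyx
      have hx10 : p1 x ≠ 0 := fun h => hC ⟨x, hx, p1_eq_zero h, hx0⟩
      have hν : symp (p1 x) (p1 y) ≠ 0 := by
        intro h
        obtain ⟨t, ht⟩ := V1_two_dim (p1_mem x) (p1_mem y) hx10 (by rw [symp_swap, h, neg_zero])
        refine hC ⟨y + (-t) • x, F2.add_mem hy (F2.smul_mem _ hx), ?_, ?_⟩
        · apply p1_eq_zero
          rw [p1_add, p1_smul, ht]; module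
        · intro h0
          apply hyx
          rw [Submodule.mem_span_singleton]
          rw [neg_smul, ← sub_eq_add_neg, sub_eq_zero] at h0
          exact ⟨t, h0.symm⟩
      obtain ⟨z, hz, hzs⟩ := exists_not_mem (W := F3) {x, y}
          (by rw [h3]; exact lt_of_le_of_lt Finset.card_le_two (by norm_num))
      simp only [Finset.coe_insert, Finset.coe_singleton] at hzs
      set ν := symp (p1 x) (p1 y) with hνd
      let α := symp (p1 z) (p1 y) / ν
      let β := symp (p1 x) (p1 z) / ν
      let w := z + (-α) • x + (-β) • y
      have hwF : w ∈ F3 :=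
        F3.add_mem (F3.add_mem hz (F3.smul_mem _ (hle hx))) (F3.smul_mem _ (hle hy))
      have hwV : w ∈ V2 := by
        rw [mem_V2]
        have hα : α * ν = z 0 * y 5 - z 5 * y 0 := by
          have : α * ν = symp (p1 z) (p1 y) := div_mul_cancel₀ _ hν
          rw [this]; simp [symp, p1]
        have hβ : β * ν = x 0 * z 5 - x 5 * z 0 := by
          have : β * ν = symp (p1 x) (p1 z) := div_mul_cancel₀ _ hν
          rw [this]; simp [symp, p1]
        have hν' : ν = x 0 * y 5 - x 5 * y 0 := by
          rw [hνd]; simp [symp, p1]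
        have hwi : ∀ i, w i = z i - α * x i - β * y i := by
          intro i
          simp only [w, Pi.add_apply, Pi.smul_apply, smul_eq_mul]; ring
        constructor
        · apply mul_left_cancel₀ hν
          rw [hwi]
          linear_combination z 0 * hν' - x 0 * hα - y 0 * hβ
        · apply mul_left_cancel₀ hν
          rw [hwi]
          linear_combination z 5 * hν' - x 5 * hα - y 5 * hβ
      have hw0 : w ≠ 0 := by
        intro h0
        apply hzs
        rw [Submodule.mem_span_pair]
        refine ⟨α, β, ?_⟩
        have : z + (-α) • x + (-β) • y = 0 := h0
        rw [add_assoc, add_eq_zero_iff_eq_neg] at this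
        rw [this]; module
      obtain ⟨g, hg, i1, i2, i3⟩ := exists_gB hwV hw0 (hiso _ (hle hx) _ (hle hy))
        (hiso _ (hle hx) _ hwF) (hiso _ (hle hy) _ hwF) hν
      refine ⟨4, g, hg, ?_, ?_⟩
      · exact map_pair h2 (ind2 5 0 (by simp [f1, f2]) (by simp [e1, e2]) (by simp [f1, f2])
          (by simp [e1, e2])) (by rwa [i1]) (by rwa [i2])
      · refine map_triple h3 (ind3 5 0 3 ?_ ?_ ?_ ?_ ?_ ?_ ?_ ?_ ?_) (by rw [i1]; exact hle hx)
          (by rw [i2]; exact hle hy) (by rwa [i3]) <;> simp [f1, f2, f3, e1, e2]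

lemma map_inf_iff {g : V6 ≃ₗ[ℚ] V6} {U : Submodule ℚ V6}
    (hU : Submodule.map (g : V6 →ₗ[ℚ] V6) U = U) (W : Submodule ℚ V6) :
    (∃ x ∈ Submodule.map (g : V6 →ₗ[ℚ] V6) W, x ∈ U ∧ x ≠ 0) ↔ ∃ x ∈ W, x ∈ U ∧ x ≠ 0 := by
  constructor
  · rintro ⟨_, ⟨x, hx, rfl⟩, hxU, hx0⟩
    refine ⟨x, hx, ?_, ?_⟩
    · rw [← hU] at hxU
      obtain ⟨x', hx', h⟩ := hxU
      rwa [← g.injective h]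
    · rintro rfl
      exact hx0 (map_zero _)
  · rintro ⟨x, hx, hxU, hx0⟩
    refine ⟨g x, ⟨x, hx, rfl⟩, ?_, ?_⟩
    · rw [← hU]; exact ⟨x, hxU, rfl⟩
    · intro h
      exact hx0 (g.map_eq_zero_iff.1 h)

lemma map_le_iff {g : V6 ≃ₗ[ℚ] V6} {U : Submodule ℚ V6}
    (hU : Submodule.map (g : V6 →ₗ[ℚ] V6) U = U) (W : Submodule ℚ V6) :
    Submodule.map (g : V6 →ₗ[ℚ] V6) W ≤ U ↔ W ≤ U := by
  conv_lhs => rw [← hU]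
  exact Submodule.map_le_map_iff_of_injective g.injective W U

/-- The numerical label of a flag, read off from invariants of the `H`-action. -/
def Label (k : Fin 5) (P : Submodule ℚ V6 × Submodule ℚ V6) : Prop :=
  ((∃ x ∈ P.2, x ∈ V1 ∧ x ≠ 0) ↔ k = 0 ∨ k = 1 ∨ k = 2) ∧
  (P.1 ≤ V2 ↔ k = 0) ∧
  ((∃ x ∈ P.1, x ∈ V1 ∧ x ≠ 0) ↔ k = 1) ∧
  ((∃ x ∈ P.1, x ∈ V2 ∧ x ≠ 0) ↔ k ≠ 4)

lemma label_rep (k : Fin 5) : Label k (repFlag k) := by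
  have ne {x : V6} (i : Fin 6) (h : x i ≠ 0) : x ≠ 0 := fun h0 => h (by rw [h0]; rfl)
  have hf1 : f1 ≠ 0 := ne 5 (by simp [f1])
  have hf2 : f2 ≠ 0 := ne 4 (by simp [f2])
  have hf3 : f3 ≠ 0 := ne 3 (by simp [f3])
  have hf1V : f1 ∈ V1 := by rw [mem_V1]; simp [f1]
  have hf2V : f2 ∈ V2 := by rw [mem_V2]; simp [f2]
  have hf3V : f3 ∈ V2 := by rw [mem_V2]; simp [f3]
  have s {S : Set V6} {x : V6} (h : x ∈ S) : x ∈ Submodule.span ℚ S := Submodule.subset_span h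
  have nle {W : Submodule ℚ V6} (x : V6) (h : x ∈ W) (h' : x 5 ≠ 0) : ¬ W ≤ V2 :=
    fun hW => h' ((mem_V2 x).1 (hW h)).2
  have hz : ∀ x : V6, (∀ i, x i = 0) → x = 0 := fun x h => funext h
  have n4 : ∀ a b : ℚ, a • (f1 + f2) + b • f3 ∈ V1 → a • (f1 + f2) + b • f3 = 0 := by
    intro a b h
    rw [mem_V1] at h
    simp [f1, f2, f3] at h
    simp [h]
  have n5 : ∀ a b : ℚ, a • (f1 + f2) + b • (e1 - e2) ∈ V1 →
      a • (f1 + f2) + b • (e1 - e2) = 0 := by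
    intro a b h
    rw [mem_V1] at h
    simp [f1, f2, e1, e2] at h
    simp [h]
  have n6 : ∀ a b : ℚ, a • (f1 + f2) + b • (e1 - e2) ∈ V2 →
      a • (f1 + f2) + b • (e1 - e2) = 0 := by
    intro a b h
    rw [mem_V2] at h
    simp [f1, f2, e1, e2] at h
    simp [h]
  have n7 : ∀ a b c : ℚ, a • (f1 + f2) + b • (e1 - e2) + c • f3 ∈ V1 →
      a • (f1 + f2) + b • (e1 - e2) + c • f3 = 0 := by
    intro a b c h
    rw [mem_V1] at h
    simp [f1, f2, f3, e1, e2] at h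
    simp [h]
  have n8 : ∀ a b : ℚ, a • f2 + b • f3 ∈ V1 → a • f2 + b • f3 = 0 := by
    intro a b h
    rw [mem_V1] at h
    simp [f2, f3] at h
    simp [h]
  fin_cases k
  · refine ⟨iff_of_true ⟨f1, s (by simp), hf1V, hf1⟩ (by decide), iff_of_true ?_ (by decide),
      iff_of_false ?_ (by decide), iff_of_true ⟨f2, s (by simp), hf2V, hf2⟩ (by decide)⟩
    · refine Submodule.span_le.2 ?_
      rintro x (rfl | rfl)
      · exact hf2V
      · exact hf3V
    · rintro ⟨x, hx, hxV, hx0⟩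
      obtain ⟨a, b, rfl⟩ := Submodule.mem_span_pair.1 hx
      exact hx0 (n8 _ _ hxV)
  · exact ⟨iff_of_true ⟨f1, s (by simp), hf1V, hf1⟩ (by decide),
      iff_of_false (nle f1 (s (by simp)) (by simp [f1])) (by decide),
      iff_of_true ⟨f1, s (by simp), hf1V, hf1⟩ (by decide),
      iff_of_true ⟨f2, s (by simp), hf2V, hf2⟩ (by decide)⟩
  · refine ⟨iff_of_true ⟨f1, s (by simp), hf1V, hf1⟩ (by decide),
      iff_of_false (nle (f1 + f2) (s (by simp)) (by simp [f1, f2])) (by decide),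
      iff_of_false ?_ (by decide), iff_of_true ⟨f3, s (by simp), hf3V, hf3⟩ (by decide)⟩
    rintro ⟨x, hx, hxV, hx0⟩
    obtain ⟨a, b, rfl⟩ := Submodule.mem_span_pair.1 hx
    exact hx0 (n4 _ _ hxV)
  · refine ⟨iff_of_false ?_ (by decide),
      iff_of_false (nle (f1 + f2) (s (by simp)) (by simp [f1, f2])) (by decide),
      iff_of_false ?_ (by decide), iff_of_true ⟨f3, s (by simp), hf3V, hf3⟩ (by decide)⟩
    · rintro ⟨x, hx, hxV, hx0⟩
      obtain ⟨a, b, c, rfl⟩ := Submodule.mem_span_triple.1 hx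
      exact hx0 (n7 _ _ _ hxV)
    · rintro ⟨x, hx, hxV, hx0⟩
      obtain ⟨a, b, rfl⟩ := Submodule.mem_span_pair.1 hx
      exact hx0 (n4 _ _ hxV)
  · refine ⟨iff_of_false ?_ (by decide),
      iff_of_false (nle (f1 + f2) (s (by simp)) (by simp [f1, f2])) (by decide),
      iff_of_false ?_ (by decide), iff_of_false ?_ (by decide)⟩
    · rintro ⟨x, hx, hxV, hx0⟩
      obtain ⟨a, b, c, rfl⟩ := Submodule.mem_span_triple.1 hx
      exact hx0 (n7 _ _ _ hxV)
    · rintro ⟨x, hx, hxV, hx0⟩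
      obtain ⟨a, b, rfl⟩ := Submodule.mem_span_pair.1 hx
      exact hx0 (n5 _ _ hxV)
    · rintro ⟨x, hx, hxV, hx0⟩
      obtain ⟨a, b, rfl⟩ := Submodule.mem_span_pair.1 hx
      exact hx0 (n6 _ _ hxV)

lemma label_map {g : V6 ≃ₗ[ℚ] V6} (hg : g ∈ Hgrp) (k : Fin 5) :
    Label k (Submodule.map (g : V6 →ₗ[ℚ] V6) (repFlag k).1,
      Submodule.map (g : V6 →ₗ[ℚ] V6) (repFlag k).2) := by
  obtain ⟨-, hV1, hV2⟩ := hg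
  unfold Label
  simp only [map_inf_iff hV1, map_inf_iff hV2, map_le_iff hV2]
  exact label_rep k

lemma label_unique {j k : Fin 5} {P : Submodule ℚ V6 × Submodule ℚ V6}
    (hj : Label j P) (hk : Label k P) : j = k := by
  obtain ⟨a1, a2, a3, a4⟩ := hj
  obtain ⟨b1, b2, b3, b4⟩ := hk
  rw [a1] at b1
  rw [a2] at b2
  rw [a3] at b3
  rw [a4] at b4
  clear a1 a2 a3 a4
  revert j k
  decide

end FlagOrbit

/-- Every `H(ℚ)`-orbit of isotropic flags `F2 ⊆ F3` (with `dim F2 = 2`, `dim F3 = 3`)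
contains exactly one of the five representatives. -/
theorem flag_orbit_classification (F2 F3 : Submodule ℚ V6)
    (h2 : Module.finrank ℚ F2 = 2) (h3 : Module.finrank ℚ F3 = 3)
    (hle : F2 ≤ F3) (hiso : IsIsotropic F3) :
    ∃! k : Fin 5, ∃ g ∈ Hgrp,
      Submodule.map (g : V6 →ₗ[ℚ] V6) (repFlag k).1 = F2 ∧
      Submodule.map (g : V6 →ₗ[ℚ] V6) (repFlag k).2 = F3 := by
  obtain ⟨k, hk⟩ := FlagOrbit.existence F2 F3 h2 h3 hle hiso
  refine ⟨k, hk, ?_⟩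
  rintro j ⟨g, hg, rfl, rfl⟩
  obtain ⟨g', hg', q2, q3⟩ := hk
  have h1 := FlagOrbit.label_map hg j
  have h2' := FlagOrbit.label_map hg' k
  rw [q2, q3] at h2'
  exact FlagOrbit.label_unique h1 h2'
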